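/- arXiv:2212.01115 — 2 statements merged into one kernel-verified Lean document; each statement's English description precedes it below -/
import Mathlib

section
/- Let m ≥ 2 and n ≥ 1, and let A1, A2 be m-order n-dimensional real tensors. The pair Ã = {A1, A2} is of type VR0 if and only if for every q1, q2 ∈ ℝⁿ the solution set of the vertical tensor complementarity problem VTCP(Ã, q̃), i.e. the set {x ∈ ℝⁿ : q1 + A1 x^{m-1} ≥ 0, q2 + A2 x^{m-1} ≥ 0, (q1 + A1 x^{m-1})ᵀ(q2 + A2 x^{m-1}) = 0}, is bounded. -/
open Finset

/-- For an `m`-order `n`-dimensional real tensor `A` (the first index separated, the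
remaining `m-1` indices given as a function `Fin (m-1) → Fin n`),
`tProd A x i = (A x^{m-1})_i = ∑_{i2,…,im} a_{i i2 ⋯ im} x_{i2} ⋯ x_{im}`. -/
noncomputable def tProd {n k : ℕ} (A : Fin n → (Fin k → Fin n) → ℝ)
    (x : Fin n → ℝ) : Fin n → ℝ :=
  fun i => ∑ f : Fin k → Fin n, A i f * ∏ j, x (f j)

/-- `x` solves the vertical tensor complementarity problem VTCP({A1,A2},{q1,q2}):
`q1 + A1 x^{m-1} ≥ 0`, `q2 + A2 x^{m-1} ≥ 0`, and
`(q1 + A1 x^{m-1})ᵀ (q2 + A2 x^{m-1}) = 0`. -/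
def VTCPSol {n k : ℕ} (A1 A2 : Fin n → (Fin k → Fin n) → ℝ)
    (q1 q2 x : Fin n → ℝ) : Prop :=
  (∀ i, 0 ≤ q1 i + tProd A1 x i) ∧ (∀ i, 0 ≤ q2 i + tProd A2 x i) ∧
    ∑ i, (q1 i + tProd A1 x i) * (q2 i + tProd A2 x i) = 0

/-!
The map `H x = A₁x^{m-1} ∧ A₂x^{m-1}` is continuous and positively homogeneous of degree `m - 1`,
and `x` solves VTCP(Ã, q̃) exactly when `(q₁ + A₁x^{m-1}) ∧ (q₂ + A₂x^{m-1}) = 0`. If `H` vanishes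
only at the origin, then compactness of the unit sphere gives `‖H x‖ ≥ ε ‖x‖^{m-1}` with `ε > 0`;
since `‖a ∧ b - c ∧ d‖ ≤ ‖a - c‖ + ‖b - d‖`, every solution satisfies
`‖H x‖ ≤ ‖q₁‖ + ‖q₂‖`, and so the solutions are bounded. Conversely, the solutions for
`q₁ = q₂ = 0` form the cone of zeros of `H`, and a bounded cone is trivial.
-/

open Bornology Filter

section PosHomogeneous

variable {E V : Type*}

/-- `H` is positively homogeneous of degree `k`, as `x ↦ A x^k` and minima of such maps are. The
scalar `0` is included, so that `H 0 = 0` whenever `k ≠ 0`. -/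
def IsPosHomogeneous [SMul ℝ E] [SMul ℝ V] (k : ℕ) (H : E → V) : Prop :=
  ∀ ⦃t : ℝ⦄, 0 ≤ t → ∀ x, H (t • x) = t ^ k • H x

namespace IsPosHomogeneous

variable {k : ℕ}

theorem inf [SMul ℝ E] [Lattice V] [AddCommGroup V] [Module ℝ V] [PosSMulMono ℝ V]
    {F G : E → V} (hF : IsPosHomogeneous k F) (hG : IsPosHomogeneous k G) :
    IsPosHomogeneous k (F ⊓ G) := by
  intro t ht x
  simp only [Pi.inf_apply, hF ht, hG ht]
  rcases (pow_nonneg ht k).eq_or_lt with h | h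
  · simp only [← h, zero_smul, inf_idem]
  · exact (map_inf (OrderIso.smulRight h) (F x) (G x)).symm

variable [NormedAddCommGroup E] [NormedSpace ℝ E]

theorem eq_zero_of_isBounded_zeros [Zero V] [SMulZeroClass ℝ V] {H : E → V}
    (hH : IsPosHomogeneous k H) (hb : IsBounded {x | H x = 0}) {x : E} (hx : H x = 0) : x = 0 := by
  obtain ⟨C, hC⟩ := hb.exists_norm_le
  have norm_smul_le : ∀ t : ℝ, 0 ≤ t → t * ‖x‖ ≤ C := fun t ht ↦ by
    have hzero : H (t • x) = 0 := by rw [hH ht, hx, smul_zero]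
    simpa only [norm_smul, Real.norm_of_nonneg ht] using hC _ hzero
  by_contra hne
  obtain ⟨N, hN⟩ := Archimedean.arch (C + 1) (norm_pos_iff.2 hne)
  rw [nsmul_eq_mul] at hN
  linarith [norm_smul_le N N.cast_nonneg]

variable [NormedAddCommGroup V] [NormedSpace ℝ V] {H : E → V}

theorem norm_apply_eq_norm_pow_mul (hH : IsPosHomogeneous k H) (x : E) :
    ‖H x‖ = ‖x‖ ^ k * ‖H (‖x‖⁻¹ • x)‖ := by
  rcases eq_or_ne x 0 with rfl | hx
  · have h := congrArg norm (hH le_rfl (0 : E))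
    simpa [norm_smul] using h
  · rw [← norm_norm x, ← norm_pow, ← norm_smul, norm_norm, ← hH (norm_nonneg x),
      smul_inv_smul₀ (norm_ne_zero_iff.2 hx)]

theorem exists_pos_mul_norm_pow_le_norm [ProperSpace E] (hH : IsPosHomogeneous k H)
    (hcont : Continuous H) (hk : k ≠ 0) (hzero : ∀ x, H x = 0 → x = 0) :
    ∃ c > 0, ∀ x, c * ‖x‖ ^ k ≤ ‖H x‖ := by
  have norm_pos : ∀ u ∈ Metric.sphere (0 : E) 1, 0 < ‖H u‖ := fun u hu ↦
    norm_pos_iff.2 fun h ↦ ne_zero_of_mem_unit_sphere ⟨u, hu⟩ (hzero u h)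
  obtain ⟨c, hc, hle⟩ :=
    (isCompact_sphere (0 : E) 1).exists_forall_le' hcont.norm.continuousOn norm_pos
  refine ⟨c, hc, fun x ↦ ?_⟩
  rcases eq_or_ne x 0 with rfl | hx
  · simp [hk]
  · have hmem : ‖x‖⁻¹ • x ∈ Metric.sphere (0 : E) 1 := by simp [norm_smul, hx]
    calc c * ‖x‖ ^ k = ‖x‖ ^ k * c := mul_comm _ _
      _ ≤ ‖x‖ ^ k * ‖H (‖x‖⁻¹ • x)‖ := by gcongr; exact hle _ hmem
      _ = ‖H x‖ := (hH.norm_apply_eq_norm_pow_mul x).symm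

theorem tendsto_cobounded [ProperSpace E] (hH : IsPosHomogeneous k H)
    (hcont : Continuous H) (hk : k ≠ 0) (hzero : ∀ x, H x = 0 → x = 0) :
    Tendsto H (cobounded E) (cobounded V) := by
  obtain ⟨c, hc, hle⟩ := hH.exists_pos_mul_norm_pow_le_norm hcont hk hzero
  refine tendsto_norm_atTop_iff_cobounded.1 (tendsto_atTop_mono hle ?_)
  exact ((tendsto_pow_atTop hk).comp tendsto_norm_cobounded_atTop).const_mul_atTop hc

end IsPosHomogeneous

end PosHomogeneous

section Complementarity

variable {ι : Type*}

instance hasSolidNorm_pi [Fintype ι] {α : ι → Type*} [∀ i, NormedAddCommGroup (α i)]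
    [∀ i, Lattice (α i)] [∀ i, HasSolidNorm (α i)] : HasSolidNorm (∀ i, α i) where
  solid _ b hab := (pi_norm_le_iff_of_nonneg (norm_nonneg b)).2 fun i ↦
    (HasSolidNorm.solid (hab i)).trans (norm_le_pi_norm b i)

variable {R : Type*} [Ring R] [LinearOrder R] [IsStrictOrderedRing R]

theorem min_eq_zero_iff_mul_eq_zero {a b : R} :
    min a b = 0 ↔ 0 ≤ a ∧ 0 ≤ b ∧ a * b = 0 := by
  rw [mul_eq_zero]
  grind

theorem inf_eq_zero_iff_dotProduct_eq_zero [Fintype ι] {a b : ι → R} :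
    a ⊓ b = 0 ↔ 0 ≤ a ∧ 0 ≤ b ∧ a ⬝ᵥ b = 0 := by
  have sum_iff (ha : 0 ≤ a) (hb : 0 ≤ b) : a ⬝ᵥ b = 0 ↔ ∀ i, a i * b i = 0 := by
    simp only [dotProduct, Finset.sum_eq_zero_iff_of_nonneg fun i _ ↦ mul_nonneg (ha i) (hb i),
      Finset.mem_univ, true_imp_iff]
  calc a ⊓ b = 0 ↔ ∀ i, 0 ≤ a i ∧ 0 ≤ b i ∧ a i * b i = 0 := by
        simp only [funext_iff, Pi.inf_apply, Pi.zero_apply, min_eq_zero_iff_mul_eq_zero]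
    _ ↔ 0 ≤ a ∧ 0 ≤ b ∧ ∀ i, a i * b i = 0 := by
        simp only [forall_and, Pi.le_def, Pi.zero_apply]
    _ ↔ 0 ≤ a ∧ 0 ≤ b ∧ a ⬝ᵥ b = 0 :=
        and_congr_right fun ha ↦ and_congr_right fun hb ↦ (sum_iff ha hb).symm

end Complementarity

theorem norm_inf_le_of_add_inf_add_eq_zero {V : Type*} [NormedAddCommGroup V] [Lattice V]
    [HasSolidNorm V] [IsOrderedAddMonoid V] {a b p q : V} (h : (p + a) ⊓ (q + b) = 0) :
    ‖a ⊓ b‖ ≤ ‖p‖ + ‖q‖ := by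
  simpa [h] using norm_inf_sub_inf_le_add_norm (p + a) (q + b) a b

section Tensor

variable {n k : ℕ}

theorem tProd_smul (A : Fin n → (Fin k → Fin n) → ℝ) (t : ℝ) (x : Fin n → ℝ) :
    tProd A (t • x) = t ^ k • tProd A x := by
  ext i
  simp only [tProd, Pi.smul_apply, smul_eq_mul, Finset.prod_mul_distrib, Finset.prod_const,
    Finset.card_univ, Fintype.card_fin, Finset.mul_sum, mul_left_comm]

theorem isPosHomogeneous_tProd (A : Fin n → (Fin k → Fin n) → ℝ) :
    IsPosHomogeneous k (tProd A) :=
  fun t _ x ↦ tProd_smul A t x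

theorem continuous_tProd (A : Fin n → (Fin k → Fin n) → ℝ) : Continuous (tProd A) := by
  unfold tProd
  fun_prop

theorem vtcpSol_iff_inf_eq_zero {A₁ A₂ : Fin n → (Fin k → Fin n) → ℝ} {q₁ q₂ x : Fin n → ℝ} :
    VTCPSol A₁ A₂ q₁ q₂ x ↔ (q₁ + tProd A₁ x) ⊓ (q₂ + tProd A₂ x) = 0 :=
  (inf_eq_zero_iff_dotProduct_eq_zero (a := q₁ + tProd A₁ x) (b := q₂ + tProd A₂ x)).symm

end Tensor

theorem stmt_7_general {E V : Type*} [NormedAddCommGroup E] [NormedSpace ℝ E] [ProperSpace E]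
    [NormedAddCommGroup V] [Lattice V] [HasSolidNorm V] [IsOrderedAddMonoid V] [NormedSpace ℝ V]
    [PosSMulMono ℝ V] {k : ℕ} (hk : k ≠ 0) {F G : E → V}
    (hF : IsPosHomogeneous k F) (hG : IsPosHomogeneous k G)
    (hFc : Continuous F) (hGc : Continuous G) :
    (∀ x, F x ⊓ G x = 0 → x = 0) ↔
      ∀ q₁ q₂ : V, IsBounded {x | (q₁ + F x) ⊓ (q₂ + G x) = 0} := by
  have hFG : IsPosHomogeneous k (F ⊓ G) := hF.inf hG
  constructor
  · intro hzero q₁ q₂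
    have hbounded : IsBounded ((F ⊓ G) ⁻¹' Metric.closedBall 0 (‖q₁‖ + ‖q₂‖)) :=
      isBounded_def.2 <| hFG.tendsto_cobounded (hFc.inf hGc) hk hzero <|
        isBounded_def.1 Metric.isBounded_closedBall
    exact hbounded.subset fun x hx ↦
      mem_closedBall_zero_iff.2 (norm_inf_le_of_add_inf_add_eq_zero hx)
  · intro hbounded x hx
    refine hFG.eq_zero_of_isBounded_zeros ?_ hx
    simpa only [zero_add, Pi.inf_apply] using hbounded 0 0

/-- `{A1, A2}` is of type VR0 iff the solution set of VTCP({A1,A2},{q1,q2}) is bounded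
for all `q1, q2`. -/
theorem stmt_7 {m n : ℕ} (hm : 2 ≤ m) (hn : 1 ≤ n)
    (A1 A2 : Fin n → (Fin (m - 1) → Fin n) → ℝ) :
    (∀ x : Fin n → ℝ, (∀ i, min (tProd A1 x i) (tProd A2 x i) = 0) → x = 0) ↔
      ∀ q1 q2 : Fin n → ℝ,
        Bornology.IsBounded {x : Fin n → ℝ | VTCPSol A1 A2 q1 q2 x} := by
  simpa only [vtcpSol_iff_inf_eq_zero, funext_iff, Pi.inf_apply, Pi.zero_apply] using
    stmt_7_general (by omega : m - 1 ≠ 0) (isPosHomogeneous_tProd A1) (isPosHomogeneous_tProd A2)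
      (continuous_tProd A1) (continuous_tProd A2)
end

section
/- Let m ≥ 2 be an even number and n ≥ 1, and let A1, A2 be m-order n-dimensional real tensors. If the pair Ã = {A1, A2} is of type VP-II, then for all q1, q2 ∈ ℝⁿ the vertical tensor complementarity problem VTCP(Ã, q̃) has at most one solution. -/
open Finset

/-- The product `A Z` of an `m`-order tensor `A` with an `(m-1)`-order tensor `Z`:
`(A Z)_i = ∑_{i2,…,im} a_{i i2 ⋯ im} z_{i2 ⋯ im}`. -/
noncomputable def tApplyZ {n k : ℕ} (A : Fin n → (Fin k → Fin n) → ℝ)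
    (Z : (Fin k → Fin n) → ℝ) : Fin n → ℝ :=
  fun i => ∑ f : Fin k → Fin n, A i f * Z f

/-- A `k`-order tensor is symmetric if its entries are invariant under all
permutations of its indices. -/
def SymTensor {n k : ℕ} (Z : (Fin k → Fin n) → ℝ) : Prop :=
  ∀ (σ : Equiv.Perm (Fin k)) (f : Fin k → Fin n), Z (f ∘ σ) = Z f

/-- The pair `{A1, A2}` is of type VP-II: there is no symmetric `(m-1)`-order tensor `Z`
whose diagonal entries are not all zero with `A1 Z ∧ A2 Z ≤ 0 ≤ A1 Z ∨ A2 Z`. -/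
def VPII {n k : ℕ} (A1 A2 : Fin n → (Fin k → Fin n) → ℝ) : Prop :=
  ¬ ∃ Z : (Fin k → Fin n) → ℝ, SymTensor Z ∧ (∃ i : Fin n, Z (fun _ => i) ≠ 0) ∧
    ∀ i, min (tApplyZ A1 Z i) (tApplyZ A2 Z i) ≤ 0 ∧
      0 ≤ max (tApplyZ A1 Z i) (tApplyZ A2 Z i)

/-! If `x` and `y` are two solutions, apply the VP-II condition to `Z = x^{⊗(m-1)} - y^{⊗(m-1)}`.
Then `Aₗ Z = (qₗ + Aₗ x^{m-1}) - (qₗ + Aₗ y^{m-1})` for `ℓ = 1, 2`, and complementarity forces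
`A1 Z ∧ A2 Z ≤ 0 ≤ A1 Z ∨ A2 Z`: in each component one of the two terms coming from `x` vanishes,
and likewise for `y`. Hence the diagonal entries `x_i^{m-1} - y_i^{m-1}` of `Z` vanish, and `m - 1`
is odd. -/

section Complementarity

variable {R : Type*} [Ring R] [NoZeroDivisors R] [LinearOrder R] {a b c d : R}

theorem min_sub_sub_nonpos_of_mul_eq_zero [IsOrderedAddMonoid R] (hab : a * b = 0) (hc : 0 ≤ c)
    (hd : 0 ≤ d) : min (a - c) (b - d) ≤ 0 := by
  rcases mul_eq_zero.mp hab with rfl | rfl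
  · exact min_le_of_left_le (by simpa using hc)
  · exact min_le_of_right_le (by simpa using hd)

theorem max_sub_sub_nonneg_of_mul_eq_zero (ha : 0 ≤ a) (hb : 0 ≤ b) (hcd : c * d = 0) :
    0 ≤ max (a - c) (b - d) := by
  rcases mul_eq_zero.mp hcd with rfl | rfl
  · exact le_max_of_le_left (by simpa using ha)
  · exact le_max_of_le_right (by simpa using hb)

end Complementarity

/-- The `k`-th tensor power `x^{⊗k}` of a vector `x`, with entries `x_{i1} ⋯ x_{ik}`; the vector
`A x^{m-1}` is the product of `A` with `x^{⊗(m-1)}`. -/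
def tensorPow {ι R : Type*} [CommMonoid R] (k : ℕ) (x : ι → R) : (Fin k → ι) → R :=
  fun f => ∏ j, x (f j)

theorem tensorPow_diag {ι R : Type*} [CommMonoid R] (k : ℕ) (x : ι → R) (i : ι) :
    tensorPow k x (fun _ => i) = x i ^ k := by
  simp [tensorPow]

section Tensors

variable {n k : ℕ}

theorem symTensor_tensorPow (x : Fin n → ℝ) : SymTensor (tensorPow k x) :=
  fun σ f => Equiv.prod_comp σ fun j => x (f j)

theorem SymTensor.sub {Z W : (Fin k → Fin n) → ℝ} (hZ : SymTensor Z) (hW : SymTensor W) :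
    SymTensor (Z - W) :=
  fun σ f => congrArg₂ (· - ·) (hZ σ f) (hW σ f)

theorem tApplyZ_sub (A : Fin n → (Fin k → Fin n) → ℝ) (Z W : (Fin k → Fin n) → ℝ) :
    tApplyZ A (Z - W) = tApplyZ A Z - tApplyZ A W := by
  ext i
  simp only [tApplyZ, Pi.sub_apply, mul_sub, sum_sub_distrib]

theorem tApplyZ_tensorPow (A : Fin n → (Fin k → Fin n) → ℝ) (x : Fin n → ℝ) :
    tApplyZ A (tensorPow k x) = tProd A x :=
  rfl

theorem tApplyZ_tensorPow_sub_tensorPow (A : Fin n → (Fin k → Fin n) → ℝ) (x y : Fin n → ℝ) :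
    tApplyZ A (tensorPow k x - tensorPow k y) = tProd A x - tProd A y := by
  rw [tApplyZ_sub, tApplyZ_tensorPow, tApplyZ_tensorPow]

variable {A1 A2 : Fin n → (Fin k → Fin n) → ℝ}

theorem VPII.diag_eq_zero (h : VPII A1 A2) {Z : (Fin k → Fin n) → ℝ} (hZ : SymTensor Z)
    (hmin : ∀ i, min (tApplyZ A1 Z i) (tApplyZ A2 Z i) ≤ 0)
    (hmax : ∀ i, 0 ≤ max (tApplyZ A1 Z i) (tApplyZ A2 Z i)) (i : Fin n) :
    Z (fun _ => i) = 0 := by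
  by_contra hi
  exact h ⟨Z, hZ, ⟨i, hi⟩, fun j => ⟨hmin j, hmax j⟩⟩

namespace VTCPSol

variable {q1 q2 x y : Fin n → ℝ}

theorem mul_eq_zero (hx : VTCPSol A1 A2 q1 q2 x) (i : Fin n) :
    (q1 i + tProd A1 x i) * (q2 i + tProd A2 x i) = 0 := by
  obtain ⟨hnonneg₁, hnonneg₂, hsum⟩ := hx
  exact (sum_eq_zero_iff_of_nonneg fun j _ => mul_nonneg (hnonneg₁ j) (hnonneg₂ j)).mp hsum i
    (mem_univ i)

theorem min_tApplyZ_nonpos (hx : VTCPSol A1 A2 q1 q2 x) (hy : VTCPSol A1 A2 q1 q2 y)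
    (i : Fin n) :
    min (tApplyZ A1 (tensorPow k x - tensorPow k y) i)
      (tApplyZ A2 (tensorPow k x - tensorPow k y) i) ≤ 0 := by
  simpa only [tApplyZ_tensorPow_sub_tensorPow, Pi.sub_apply, add_sub_add_left_eq_sub] using
    min_sub_sub_nonpos_of_mul_eq_zero (hx.mul_eq_zero i) (hy.1 i) (hy.2.1 i)

theorem max_tApplyZ_nonneg (hx : VTCPSol A1 A2 q1 q2 x) (hy : VTCPSol A1 A2 q1 q2 y)
    (i : Fin n) :
    0 ≤ max (tApplyZ A1 (tensorPow k x - tensorPow k y) i)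
      (tApplyZ A2 (tensorPow k x - tensorPow k y) i) := by
  simpa only [tApplyZ_tensorPow_sub_tensorPow, Pi.sub_apply, add_sub_add_left_eq_sub] using
    max_sub_sub_nonneg_of_mul_eq_zero (hx.1 i) (hx.2.1 i) (hy.mul_eq_zero i)

end VTCPSol

end Tensors

/-- For even order, if `{A1, A2}` is of type VP-II then the VTCP has at most one solution
for all `q1, q2`. -/
theorem stmt_11 {m n : ℕ} (hm : 2 ≤ m) (heven : Even m) (hn : 1 ≤ n)
    (A1 A2 : Fin n → (Fin (m - 1) → Fin n) → ℝ)
    (hVPII : VPII A1 A2) :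
    ∀ q1 q2 x y : Fin n → ℝ,
      VTCPSol A1 A2 q1 q2 x → VTCPSol A1 A2 q1 q2 y → x = y := by
  intro q1 q2 x y hx hy
  have hodd : Odd (m - 1) := Nat.Even.sub_odd (one_le_two.trans hm) heven odd_one
  have hsymm : SymTensor (tensorPow (m - 1) x - tensorPow (m - 1) y) :=
    (symTensor_tensorPow x).sub (symTensor_tensorPow y)
  ext i
  have hdiag : tensorPow (m - 1) x (fun _ => i) - tensorPow (m - 1) y (fun _ => i) = 0 :=
    hVPII.diag_eq_zero hsymm (hx.min_tApplyZ_nonpos hy) (hx.max_tApplyZ_nonneg hy) i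
  rw [tensorPow_diag, tensorPow_diag, sub_eq_zero] at hdiag
  exact hodd.pow_injective hdiag
end
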